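/- arXiv:1607.05889 — 2 statements merged into one kernel-verified Lean document; each statement's English description precedes it below -/
import Mathlib

section
/- Let λ₁ and ν₁ be multiplicative characters of F_q with λ₁²φ = ν₁⁴. Then H(λ₁) = ( A₄(a) + A̅₄(a) ) · Σ_{m=0}^{3} J(ν₁A₄^{m}, φ). -/
/-!
If `i ^ 2 = -1` and `j ≠ ±1`, the condition `x (j + 1) ^ 2 + a (j - 1) ^ 2 / x = 0` says that
`x = k b` with `k = i (j - 1) / (j + 1)` and `b ^ 2 = a`. Then `x - a / x = b (k - k⁻¹)`, and
`k - k⁻¹` is `1 - j ^ 4` up to a nonzero square, so `H` factors as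
`(∑_{b ^ 2 = a} φ(b)) (∑_j (ν₁ ^ 4)(j) φ(1 - j ^ 4))`. Both factors are evaluated by counting
`n`-th roots with a character `χ` of order `n`: `#{z | z ^ n = y} = ∑_{m < n} χ ^ m (y)`. The first
uses `n = 2` and `A₄(a) φ(a) = A₄⁻¹(a)`, the second `n = 4`.
-/

open Finset

noncomputable section

variable {F : Type} [Field F] [Fintype F] [DecidableEq F]

/-- Katz's mixed character sum `P(j,k)`; the quadratic character `φ` is `A₄ ^ 2`. -/
def Pkatz (ψ : AddChar F ℂ) (A₄ : MulChar F ℂ) (a : F) (j k : F) : ℂ :=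
  (if j = k then 1 else 0) + (A₄ ^ 2) (-1) * (if j = -k then 1 else 0) +
    (gaussSum (A₄ ^ 2) ψ)⁻¹ *
      ∑ x ∈ univ.filter (fun x : F => x ≠ 0),
        (A₄ ^ 2) (a / x - x) * ψ (x * (j + k) ^ 2 + (a / x) * (j - k) ^ 2)

/-- Katz's sums `V(j)`. -/
def Vkatz (ψ : AddChar F ℂ) (A₄ : MulChar F ℂ) (a : F) (τ : ℂ) (j : F) : ℂ :=
  if j = 0 then gaussSum A₄ ψ / τ + τ / gaussSum A₄ ψ
  else τ⁻¹ * ∑ x ∈ univ.filter (fun x : F => x ≠ 0), A₄ x * ψ (x + a * j ^ 4 / x)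

/-- The finite field hypergeometric function `₂F₁(A,B;C|x)`. -/
def hyp2F1 (A B C : MulChar F ℂ) (x : F) : ℂ :=
  ((1 : MulChar F ℂ) x / (Fintype.card F : ℂ)) *
    ∑ y : F, B y * (B⁻¹ * C) (y - 1) * A⁻¹ (1 - x * y)

/-- The Jacobi sum `J(A,B)`. -/
def Jsum (A B : MulChar F ℂ) : ℂ := ∑ y : F, A y * B (1 - y)

/-- The sum `h(D,j)`; the quadratic character `φ` is `A₄ ^ 2`. -/
def hKatz (A₄ D : MulChar F ℂ) (j : F) : ℂ :=
  ∑ x ∈ univ.filter (fun x : F => x ≠ 0),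
    D x * (A₄ ^ 2) (1 - x) * ((D⁻¹ ^ 2) * A₄ ^ 2) (x * (j + 1) ^ 2 + (j - 1) ^ 2)

/-- The sum `H(λ₁)`; the quadratic character `φ` is `A₄ ^ 2`. -/
def Hkatz (A₄ lam : MulChar F ℂ) (a : F) : ℂ :=
  ∑ p ∈ (univ ×ˢ univ).filter
      (fun p : F × F => p.1 ≠ 0 ∧ p.2 ≠ 0 ∧
        p.2 * (p.1 + 1) ^ 2 + a * (p.1 - 1) ^ 2 / p.2 = 0),
    (lam ^ 2 * A₄ ^ 2) p.1 * (A₄ ^ 2) (p.2 - a / p.2)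

/-- The Mellin transform `S(χ)` of the sums `V(j)`. -/
def Smel (ψ : AddChar F ℂ) (A₄ : MulChar F ℂ) (a : F) (τ : ℂ) (χ : MulChar F ℂ) : ℂ :=
  ∑ j ∈ univ.filter (fun j : F => j ≠ 0), χ j * Vkatz ψ A₄ a τ j

/-- The Mellin transform `T(χ)` of the sums `P(j,0)`. -/
def Tmel (ψ : AddChar F ℂ) (A₄ : MulChar F ℂ) (a : F) (χ : MulChar F ℂ) : ℂ :=
  ∑ j ∈ univ.filter (fun j : F => j ≠ 0), χ j * Pkatz ψ A₄ a j 0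

/-- The double Mellin transform `T(χ₁,χ₂)` of the sums `P(j,k)`. -/
def Tmel2 (ψ : AddChar F ℂ) (A₄ : MulChar F ℂ) (a : F) (χ₁ χ₂ : MulChar F ℂ) : ℂ :=
  ∑ j ∈ univ.filter (fun j : F => j ≠ 0), ∑ k ∈ univ.filter (fun k : F => k ≠ 0),
    χ₁ j * χ₂ k * Pkatz ψ A₄ a j k

end

section CharactersOfGivenOrder

section Values

variable {M R : Type*} [CommMonoid M] [CommMonoidWithZero R]

lemma mulChar_unit_apply_eq_one_iff [Finite Mˣ] [IsCyclic Mˣ] (χ : MulChar M R) (u : Mˣ) :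
    χ u = 1 ↔ ∃ z : Mˣ, z ^ orderOf χ = u := by
  constructor
  · intro hu
    obtain ⟨g, hg⟩ := IsCyclic.exists_generator (α := Mˣ)
    obtain ⟨k, rfl⟩ := mem_powers_iff_mem_zpowers.mpr (hg u)
    have hχk : χ ^ k = 1 := by
      rw [MulChar.eq_iff hg, MulChar.pow_apply_coe, MulChar.one_apply_coe, ← map_pow]
      exact_mod_cast hu
    obtain ⟨l, rfl⟩ := orderOf_dvd_of_pow_eq_one hχk
    exact ⟨g ^ l, by rw [← pow_mul, mul_comm]⟩
  · rintro ⟨z, rfl⟩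
    rw [Units.val_pow_eq_pow_val, map_pow, ← MulChar.pow_apply_coe, pow_orderOf_eq_one,
      MulChar.one_apply_coe]

lemma mulChar_apply_mul_pow {φ : MulChar M R} {n : ℕ} (hφ : φ ^ n = 1) (u : M) {s : M}
    (hs : IsUnit s) : φ (u * s ^ n) = φ u := by
  lift s to Mˣ using hs
  rw [map_mul, map_pow, ← MulChar.pow_apply_coe, hφ, MulChar.one_apply_coe, mul_one]

end Values

variable {F R : Type*} [Field F] [Fintype F] [CommRing R] [IsDomain R]

lemma exists_isPrimitiveRoot_of_dvd_card_sub_one {n : ℕ} (hn : n ∣ Fintype.card F - 1) :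
    ∃ ζ : F, IsPrimitiveRoot ζ n := by
  obtain ⟨g, hg⟩ := IsCyclic.exists_ofOrder_eq_natCard (α := Fˣ)
  obtain ⟨k, hk⟩ := hn
  rw [Nat.card_units, Nat.card_eq_fintype_card] at hg
  have hpos : 0 < Fintype.card F - 1 := Nat.sub_pos_of_lt Fintype.one_lt_card
  exact ⟨(g ^ k : Fˣ), IsPrimitiveRoot.coe_units_iff.mpr
    ((hg ▸ IsPrimitiveRoot.orderOf g).pow hpos (hk.trans (mul_comm n k)))⟩

lemma card_pow_eq_of_dvd_card_sub_one [DecidableEq F] {n : ℕ} (hn : n ∣ Fintype.card F - 1)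
    {y : F} (hy : y ≠ 0) (hroot : ∃ z, z ^ n = y) : #{z : F | z ^ n = y} = n := by
  obtain ⟨ζ, hζ⟩ := exists_isPrimitiveRoot_of_dvd_card_sub_one hn
  have hpos : 0 < n := Nat.pos_of_dvd_of_pos hn (Nat.sub_pos_of_lt Fintype.one_lt_card)
  have hroots : ({z : F | z ^ n = y} : Finset F) = (Polynomial.nthRoots n y).toFinset := by
    ext z
    rw [mem_filter_univ, Multiset.mem_toFinset, Polynomial.mem_nthRoots hpos]
  rw [hroots, Multiset.toFinset_card_of_nodup (hζ.nthRoots_nodup hy), hζ.card_nthRoots,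
    if_pos hroot]

lemma card_pow_orderOf_eq_sum_pow_apply [DecidableEq F] (χ : MulChar F R) {y : F}
    (hy : y ≠ 0) :
    (#{z : F | z ^ orderOf χ = y} : R) = ∑ m ∈ range (orderOf χ), (χ ^ m) y := by
  lift y to Fˣ using hy.isUnit
  simp only [MulChar.pow_apply_coe]
  by_cases hχy : χ y = 1
  · obtain ⟨z, hz⟩ := (mulChar_unit_apply_eq_one_iff χ y).mp hχy
    have hroot : ∃ w : F, w ^ orderOf χ = y := ⟨z, by rw [← hz, Units.val_pow_eq_pow_val]⟩
    rw [card_pow_eq_of_dvd_card_sub_one χ.orderOf_dvd_card_sub_one hy hroot]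
    simp [hχy]
  · have hempty : #{z : F | z ^ orderOf χ = y} = 0 := by
      rw [card_eq_zero, filter_eq_empty_iff]
      intro z _ hz
      have hz0 : z ≠ 0 := by
        rintro rfl
        exact hy (hz ▸ zero_pow χ.orderOf_pos.ne')
      exact hχy ((mulChar_unit_apply_eq_one_iff χ y).mpr ⟨Units.mk0 z hz0, Units.ext hz⟩)
    have hgeom : (∑ m ∈ range (orderOf χ), χ y ^ m) * (χ y - 1) = 0 := by
      rw [geom_sum_mul, ← MulChar.pow_apply_coe, pow_orderOf_eq_one, MulChar.one_apply_coe,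
        sub_self]
    rw [hempty, Nat.cast_zero, (mul_eq_zero.mp hgeom).resolve_right (sub_ne_zero.mpr hχy)]

lemma sum_comp_pow_orderOf (χ : MulChar F R) {f : F → R} (hf : f 0 = 0) :
    ∑ j, f (j ^ orderOf χ) = ∑ y, f y * ∑ m ∈ range (orderOf χ), (χ ^ m) y := by
  classical
  rw [← sum_fiberwise (s := univ) (g := fun j : F => j ^ orderOf χ)]
  refine sum_congr rfl fun y _ => ?_
  rcases eq_or_ne y 0 with rfl | hy
  · rw [hf, zero_mul]
    exact sum_eq_zero fun j hj => by rw [(mem_filter.mp hj).2, hf]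
  · rw [← card_pow_orderOf_eq_sum_pow_apply χ hy, mul_comm, ← nsmul_eq_mul]
    exact sum_eq_card_nsmul fun j hj => by rw [(mem_filter.mp hj).2]

lemma sum_pow_mul_one_sub_pow_eq_sum_jacobiSum (χ ν ψ : MulChar F R) :
    ∑ j, (ν ^ orderOf χ) j * ψ (1 - j ^ orderOf χ) =
      ∑ m ∈ range (orderOf χ), jacobiSum (ν * χ ^ m) ψ := by
  calc ∑ j, (ν ^ orderOf χ) j * ψ (1 - j ^ orderOf χ)
      = ∑ j, ν (j ^ orderOf χ) * ψ (1 - j ^ orderOf χ) := by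
        simp only [MulChar.pow_apply' ν χ.orderOf_pos.ne', map_pow]
    _ = ∑ y, ν y * ψ (1 - y) * ∑ m ∈ range (orderOf χ), (χ ^ m) y :=
        sum_comp_pow_orderOf χ (f := fun y => ν y * ψ (1 - y))
          (by simp only [MulChar.map_zero, zero_mul])
    _ = ∑ y, ∑ m ∈ range (orderOf χ), (ν * χ ^ m) y * ψ (1 - y) := by
        simp only [mul_sum, MulChar.mul_apply, mul_right_comm]
    _ = ∑ m ∈ range (orderOf χ), jacobiSum (ν * χ ^ m) ψ := sum_comm

lemma sum_pow_apply_of_pow_orderOf_eq [DecidableEq F] (χ ν : MulChar F R) {a : F} (ha : a ≠ 0) :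
    ∑ b with b ^ orderOf χ = a, (ν ^ orderOf χ) b = ∑ m ∈ range (orderOf χ), (ν * χ ^ m) a := by
  calc ∑ b with b ^ orderOf χ = a, (ν ^ orderOf χ) b
      = #{b | b ^ orderOf χ = a} • ν a :=
        sum_eq_card_nsmul fun b hb => by
          rw [MulChar.pow_apply' ν χ.orderOf_pos.ne', ← map_pow, (mem_filter.mp hb).2]
    _ = ∑ m ∈ range (orderOf χ), (ν * χ ^ m) a := by
        simp only [nsmul_eq_mul, card_pow_orderOf_eq_sum_pow_apply χ ha, mul_comm _ (ν a), mul_sum,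
          MulChar.mul_apply]

lemma sum_sq_apply_of_sq_eq [DecidableEq F] {A : MulChar F R} (hA : orderOf A = 4) {a : F}
    (ha : a ≠ 0) :
    ∑ b with b ^ 2 = a, (A ^ 2) b = A a + A⁻¹ a := by
  have hsq : orderOf (A ^ 2) = 2 := by
    rw [orderOf_pow_of_dvd two_ne_zero (by rw [hA]; norm_num), hA]
  have hinv : A * A ^ 2 = A⁻¹ := eq_inv_of_mul_eq_one_left <| by
    rw [← pow_succ', ← pow_succ, ← pow_orderOf_eq_one A, hA]
  have hsum := sum_pow_apply_of_pow_orderOf_eq (A ^ 2) A ha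
  rwa [hsq, sum_range_succ, sum_range_one, pow_zero, mul_one, pow_one, hinv] at hsum

end CharactersOfGivenOrder

section SolutionsOverFixedFirstCoordinate

variable {F : Type*} [Field F] {i : F}

lemma mul_add_one_sq_add_div_ne_zero (h2 : (2 : F) ≠ 0) {a j x : F} (ha : a ≠ 0)
    (hj : (j - 1) * (j + 1) = 0) (hx : x ≠ 0) :
    x * (j + 1) ^ 2 + a * (j - 1) ^ 2 / x ≠ 0 := by
  rcases mul_eq_zero.mp hj with hj₁ | hj₂
  · have hj' : j + 1 = 2 := by linear_combination hj₁
    simp [hj₁, hj', hx, h2]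
  · have hj' : j - 1 = -2 := by linear_combination hj₂
    simp [hj₂, hj', hx, ha, h2]

lemma ne_zero_and_mul_add_one_sq_add_div_eq_zero_iff (hi : i ^ 2 = -1) {a j x : F} (ha : a ≠ 0)
    (hj₁ : j - 1 ≠ 0) (hj₂ : j + 1 ≠ 0) :
    x ≠ 0 ∧ x * (j + 1) ^ 2 + a * (j - 1) ^ 2 / x = 0 ↔
      x ^ 2 = (i * (j - 1) / (j + 1)) ^ 2 * a := by
  rw [div_pow, mul_pow, hi]
  rcases eq_or_ne x 0 with rfl | hx
  · simp [ha, hj₁, hj₂]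
  · simp only [ne_eq, hx, not_false_eq_true, true_and]
    field_simp
    constructor <;> intro h <;> linear_combination h

lemma sub_inv_eq_one_sub_pow_four_mul_sq (hi : i ^ 2 = -1) {j : F} (hj₁ : j - 1 ≠ 0)
    (hj₂ : j + 1 ≠ 0) :
    i * (j - 1) / (j + 1) - (i * (j - 1) / (j + 1))⁻¹ =
      (1 - j ^ 4) * ((1 - i) / ((j - 1) * (j + 1))) ^ 2 := by
  have hi0 : i ≠ 0 := fun h => by simp [h] at hi
  field_simp
  linear_combination ((1 - j ^ 4) * (1 - i) + 2 * j * (1 - j ^ 2)) * hi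

variable [Fintype F] [DecidableEq F] {R : Type*} [CommSemiring R]

lemma sum_apply_sub_div_of_sq_eq_sq_mul (φ : MulChar F R) (a : F) {k : F} (hk : k ≠ 0) :
    ∑ x with x ^ 2 = k ^ 2 * a, φ (x - a / x) = φ (k - k⁻¹) * ∑ b with b ^ 2 = a, φ b := by
  rw [mul_sum]
  refine (sum_equiv (Equiv.mulLeft₀ k hk) (fun b => ?_) fun b hb => ?_).symm
  · simp [mul_pow, hk]
  · have hba : b ^ 2 = a := (mem_filter.mp hb).2
    rw [← map_mul, Equiv.mulLeft₀_apply, ← hba]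
    congr 1
    rcases eq_or_ne b 0 with rfl | hb0
    · simp
    · field_simp

lemma sum_apply_sub_div_of_mul_add_one_sq_add_div_eq_zero (h2 : (2 : F) ≠ 0)
    (hi : i ^ 2 = -1) {φ : MulChar F R} (hφ : φ ^ 2 = 1) {a : F} (ha : a ≠ 0) (j : F) :
    ∑ x with x ≠ 0 ∧ x * (j + 1) ^ 2 + a * (j - 1) ^ 2 / x = 0, φ (x - a / x) =
      φ (1 - j ^ 4) * ∑ b with b ^ 2 = a, φ b := by
  have hi0 : i ≠ 0 := fun h => by simp [h] at hi
  have h1i : 1 - i ≠ 0 := fun h => mul_ne_zero h2 hi0 (by linear_combination hi - (1 - i) * h)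
  by_cases hj : (j - 1) * (j + 1) = 0
  · have hj4 : 1 - j ^ 4 = 0 := by linear_combination -(j ^ 2 + 1) * hj
    rw [hj4, MulChar.map_zero, zero_mul]
    refine sum_eq_zero fun x hx => ?_
    obtain ⟨hx0, hcond⟩ := (mem_filter.mp hx).2
    exact absurd hcond (mul_add_one_sq_add_div_ne_zero h2 ha hj hx0)
  obtain ⟨hj₁, hj₂⟩ := mul_ne_zero_iff.mp hj
  have hk : i * (j - 1) / (j + 1) ≠ 0 := div_ne_zero (mul_ne_zero hi0 hj₁) hj₂
  calc ∑ x with x ≠ 0 ∧ x * (j + 1) ^ 2 + a * (j - 1) ^ 2 / x = 0, φ (x - a / x)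
      = ∑ x with x ^ 2 = (i * (j - 1) / (j + 1)) ^ 2 * a, φ (x - a / x) := by
        simp only [ne_zero_and_mul_add_one_sq_add_div_eq_zero_iff hi ha hj₁ hj₂]
    _ = φ (1 - j ^ 4) * ∑ b with b ^ 2 = a, φ b := by
        rw [sum_apply_sub_div_of_sq_eq_sq_mul φ a hk,
          sub_inv_eq_one_sub_pow_four_mul_sq hi hj₁ hj₂,
          mulChar_apply_mul_pow hφ _ (div_ne_zero h1i hj).isUnit]

end SolutionsOverFixedFirstCoordinate

lemma Hkatz_eq_sum_mul_sum {F : Type} [Field F] [Fintype F] [DecidableEq F] (h2 : (2 : F) ≠ 0)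
    {i : F} (hi : i ^ 2 = -1) {A₄ : MulChar F ℂ} (hA₄ : A₄ ^ 4 = 1) (lam : MulChar F ℂ) {a : F}
    (ha : a ≠ 0) :
    Hkatz A₄ lam a = (∑ b with b ^ 2 = a, (A₄ ^ 2) b) *
      ∑ j, (lam ^ 2 * A₄ ^ 2) j * (A₄ ^ 2) (1 - j ^ 4) := by
  have hφ : (A₄ ^ 2) ^ 2 = 1 := by rw [← pow_mul, hA₄]
  rw [Hkatz, sum_filter, sum_product, mul_sum]
  refine sum_congr rfl fun j _ => ?_
  rcases eq_or_ne j 0 with rfl | hj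
  · simp [MulChar.map_zero]
  · rw [mul_left_comm, mul_comm (∑ b with b ^ 2 = a, (A₄ ^ 2) b),
      ← sum_apply_sub_div_of_mul_add_one_sq_add_div_eq_zero h2 hi hφ ha, mul_sum, sum_filter]
    simp only [hj, ne_eq, not_false_eq_true, true_and]

/-- Evaluation of `H(λ₁)` when `λ₁²φ = ν₁⁴`. -/
theorem H_eval_fourth_power
    (F : Type) [Field F] [Fintype F] [DecidableEq F]
    (hq : Fintype.card F % 4 = 1)
    (A₄ : MulChar F ℂ) (hA₄ : orderOf A₄ = 4)
    (a : F) (ha : a ≠ 0)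
    (lam ν₁ : MulChar F ℂ) (h : lam ^ 2 * A₄ ^ 2 = ν₁ ^ 4) :
    Hkatz A₄ lam a =
      (A₄ a + A₄⁻¹ a) * ∑ m ∈ Finset.range 4, Jsum (ν₁ * A₄ ^ m) (A₄ ^ 2) := by
  have h2 : (2 : F) ≠ 0 := Ring.two_ne_zero fun hchar => by
    have := FiniteField.even_card_of_char_two hchar
    omega
  obtain ⟨i, hi⟩ := FiniteField.isSquare_neg_one_iff.mpr (show Fintype.card F % 4 ≠ 3 by omega)
  have hA₄_pow : A₄ ^ 4 = 1 := hA₄ ▸ pow_orderOf_eq_one A₄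
  calc Hkatz A₄ lam a
      = (∑ b with b ^ 2 = a, (A₄ ^ 2) b) * ∑ j, (ν₁ ^ 4) j * (A₄ ^ 2) (1 - j ^ 4) := by
        rw [Hkatz_eq_sum_mul_sum h2 (by rw [sq, hi]) hA₄_pow lam ha, h]
    _ = (A₄ a + A₄⁻¹ a) * ∑ m ∈ range 4, jacobiSum (ν₁ * A₄ ^ m) (A₄ ^ 2) := by
        rw [sum_sq_apply_of_sq_eq hA₄ ha, ← hA₄, sum_pow_mul_one_sub_pow_eq_sum_jacobiSum]
    _ = (A₄ a + A₄⁻¹ a) * ∑ m ∈ range 4, Jsum (ν₁ * A₄ ^ m) (A₄ ^ 2) := rfl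
end

section
/- Let λ₁, λ₂, μ be multiplicative characters of F_q with λ₁λ₂φ = μ², and set χ₁ = λ₁²φ, χ₂ = λ₂²φ. If μ⁴ is nontrivial and χ₁ is not a fourth power (i.e., there is no multiplicative character ν with χ₁ = ν⁴), then T(χ₁,χ₂) = 0. -/
/-!
Let `i² = -1`. For nonzero `j` and `k` the sum `P(j, k)` is invariant under `j ↦ ij`, so
`T(χ₁, χ₂) = χ₁(i) T(χ₁, χ₂)`; and `χ₁(i) = 1` would make `χ₁` a fourth power, because `i` is a
primitive fourth root of unity.

To see the invariance, parametrize the sum over `x` by the points `(u, v) = (x + a/x, x - a/x)` of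
the conic `u² = v² + 4a`, where its phase is `(j² + k²)u + 2jkv`, and detect the conic by an
auxiliary additive variable `t`. Summing over `u`, the terms with `t ≠ 0` contribute
`∑ₜ φ(-t) ψ(4at + (j² + k²)²/(4t)) K(t, jk)` with `K(t, b) = ∑ᵥ φ(v) ψ(tv² + 2bv)`. Here `K` is the
finite field analogue of the parabolic cylinder function of index `-1/2`, which satisfies
`K(t, b) = ψ(-b²/t) K(t, ib)`. Since `(j² + k²)² - 4(jk)² = (k² - j²)²`, this is exactly the effect
of `j ↦ ij`. The term `t = 0` contributes `δ(j² + k², 0)`, which `j ↦ ij` interchanges with the part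
`δ(j, k) + δ(j, -k) = δ(j², k²)` of `P(j, k)`.
-/

open Finset

lemma ite_eq_add_ite_eq_neg {F R : Type*} [Field F] [DecidableEq F] [AddMonoidWithOne R]
    (hF : ringChar F ≠ 2) {k : F} (hk : k ≠ 0) (j : F) :
    (if j = k then (1 : R) else 0) + (if j = -k then 1 else 0) =
      if j ^ 2 = k ^ 2 then 1 else 0 := by
  have hkk : k ≠ -k := fun h => hk ((Ring.eq_self_iff_eq_zero_of_char_ne_two hF).1 h.symm)
  by_cases hjk : j = k
  · simp [hjk, hkk]
  · simp [sq_eq_sq_iff_eq_or_eq_neg, hjk]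

lemma sq_apply_neg_one {M R : Type*} [CommRing M] [CommMonoidWithZero R] (A : MulChar M R) :
    (A ^ 2) (-1) = 1 := by
  rw [MulChar.pow_apply' A two_ne_zero, ← map_pow, neg_one_sq, map_one]

section QuadraticCharacter

variable {F R : Type*} [Field F] [CommRing R] {φ : MulChar F R}

lemma quadratic_apply_sq_mul (hφ : φ.IsQuadratic) {s : F} (hs : s ≠ 0) (y : F) :
    φ (s ^ 2 * y) = φ y := by
  rw [map_mul, map_pow, ← MulChar.pow_apply' φ two_ne_zero, hφ.sq_eq_one,
    MulChar.one_apply hs.isUnit, one_mul]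

lemma quadratic_apply_sq (hφ : φ.IsQuadratic) {s : F} (hs : s ≠ 0) : φ (s ^ 2) = 1 := by
  simpa only [mul_one, map_one] using quadratic_apply_sq_mul hφ hs 1

lemma ringChar_ne_two_of_isQuadratic [Finite F] (hφ : φ.IsQuadratic) (hφ1 : φ ≠ 1) :
    ringChar F ≠ 2 := by
  intro hF
  refine hφ1 (MulChar.eq_one_iff.2 fun y => ?_)
  obtain ⟨r, hr⟩ := FiniteField.isSquare_of_char_two hF (y : F)
  have hr0 : r ≠ 0 := fun h => y.ne_zero (by rw [hr, h, mul_zero])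
  rw [hr, ← sq, quadratic_apply_sq hφ hr0]

variable [Fintype F]

lemma quadratic_apply_eq_quadraticChar [DecidableEq F] (hφ : φ.IsQuadratic) (hφ1 : φ ≠ 1) (y : F) :
    φ y = (quadraticChar F y : ℤ) := by
  have of_isSquare {z : F} (hz0 : z ≠ 0) (hz : IsSquare z) : φ z = 1 := by
    obtain ⟨r, rfl⟩ := hz
    rw [← sq, quadratic_apply_sq hφ (left_ne_zero_of_mul hz0)]
  obtain rfl | hy0 := eq_or_ne y 0
  · rw [MulChar.map_nonunit φ not_isUnit_zero, quadraticChar_zero, Int.cast_zero]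
  by_cases hy : IsSquare y
  · rw [of_isSquare hy0 hy, (quadraticChar_one_iff_isSquare hy0).2 hy, Int.cast_one]
  -- Some `u` has `φ u = -1`; it is a nonsquare, so `u * y` is a square.
  obtain ⟨u, hu⟩ := MulChar.ne_one_iff.1 hφ1
  have hy' := quadraticChar_neg_one_iff_not_isSquare.2 hy
  have hu' := quadraticChar_neg_one_iff_not_isSquare.2 fun h => hu (of_isSquare u.ne_zero h)
  have huy : φ (u * y) = 1 := by
    have huy0 := mul_ne_zero u.ne_zero hy0
    refine of_isSquare huy0 ((quadraticChar_one_iff_isSquare huy0).1 ?_)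
    rw [map_mul, hu', hy', neg_one_mul, neg_neg]
  rw [hy', Int.cast_neg, Int.cast_one]
  rw [map_mul] at huy
  rcases hφ u with h | h | h
  · rw [h, zero_mul] at huy
    exact absurd (by rw [h, huy]) hu
  · exact absurd h hu
  · rw [h] at huy
    linear_combination -huy

lemma sum_comp_sq (hφ : φ.IsQuadratic) (hφ1 : φ ≠ 1) (g : F → R) :
    ∑ w, g (w ^ 2) = ∑ y, (φ y + 1) * g y := by
  classical
  have card_sqrts (y : F) : (#{w | w ^ 2 = y} : R) = φ y + 1 := by
    have h := quadraticChar_card_sqrts (ringChar_ne_two_of_isQuadratic hφ hφ1) y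
    rw [Set.toFinset_ofPred] at h
    rw [quadratic_apply_eq_quadraticChar hφ hφ1]
    exact_mod_cast congrArg (Int.cast : ℤ → R) h
  rw [← sum_fiberwise _ (fun w : F => w ^ 2)]
  refine sum_congr rfl fun y _ => ?_
  rw [← card_sqrts, ← nsmul_eq_mul]
  exact sum_eq_card_nsmul fun w hw => congrArg g (mem_filter.1 hw).2

end QuadraticCharacter

section QuadraticGaussSum

variable {F R : Type*} [Field F] [Fintype F] [CommRing R] [IsDomain R]
  {φ : MulChar F R} {ψ : AddChar F R}

lemma card_cast_ne_zero_of_addChar_ne_one (hψ : ψ ≠ 1) : (Fintype.card F : R) ≠ 0 := by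
  obtain ⟨p, -, n, hp, hcard⟩ := FiniteField.card' F
  intro h
  have hp0 : (p : R) = 0 := by
    rw [hcard, Nat.cast_pow] at h
    exact eq_zero_of_pow_eq_zero h
  have : Fact p.Prime := ⟨hp⟩
  have : CharP R p := (CharP.charP_iff_prime_eq_zero hp).2 hp0
  refine hψ (DFunLike.ext _ _ fun x => sub_eq_zero.1 ?_)
  have hpow : (ψ x - 1) ^ Fintype.card F = 0 := by
    rw [hcard, sub_pow_char_pow, ← hcard, ← AddChar.map_nsmul_eq_pow, card_nsmul_eq_zero,
      AddChar.map_zero_eq_one, one_pow, sub_self]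
  exact eq_zero_of_pow_eq_zero hpow

lemma gaussSum_ne_zero_of_ne_one (hφ1 : φ ≠ 1) (hψ : ψ ≠ 1) : gaussSum φ ψ ≠ 0 :=
  gaussSum_ne_zero_of_nontrivial (card_cast_ne_zero_of_addChar_ne_one hψ) hφ1 (.of_ne_one hψ)

lemma sum_quadratic_mul_addChar (hφ : φ.IsQuadratic) (hφ1 : φ ≠ 1) (c : F) :
    ∑ s, φ s * ψ (c * s) = φ c * gaussSum φ ψ := by
  obtain rfl | hc := eq_or_ne c 0
  · simp only [zero_mul, AddChar.map_zero_eq_one, mul_one, MulChar.sum_eq_zero_of_ne_one hφ1,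
      MulChar.map_zero]
  · simpa only [gaussSum, AddChar.mulShift_apply, hφ.inv, Units.val_mk0] using
      gaussSum_mulShift_eq φ ψ (Units.mk0 c hc)

lemma sum_addChar_mul_sq (hφ : φ.IsQuadratic) (hφ1 : φ ≠ 1) (hψ : ψ ≠ 1) {t : F} (ht : t ≠ 0) :
    ∑ w, ψ (t * w ^ 2) = φ t * gaussSum φ ψ := by
  classical
  have hψt : ∑ y, ψ (t * y) = 0 := by
    simpa only [mul_comm t, if_neg ht, Nat.cast_zero] using
      AddChar.sum_mulShift t (AddChar.IsPrimitive.of_ne_one hψ)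
  rw [sum_comp_sq hφ hφ1 fun y => ψ (t * y)]
  simp only [add_mul, one_mul, sum_add_distrib, hψt, add_zero, sum_quadratic_mul_addChar hφ hφ1]

lemma sum_addChar_quadratic (hφ : φ.IsQuadratic) (hφ1 : φ ≠ 1) (hψ : ψ ≠ 1) {t : F} (ht : t ≠ 0)
    (b : F) : ∑ w, ψ (t * w ^ 2 + b * w) = ψ (-(b ^ 2 / (4 * t))) * (φ t * gaussSum φ ψ) := by
  have h2 : (2 : F) ≠ 0 := Ring.two_ne_zero (ringChar_ne_two_of_isQuadratic hφ hφ1)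
  have h4 : (4 : F) ≠ 0 := by simpa only [← two_add_two_eq_four, ← two_mul] using mul_ne_zero h2 h2
  rw [← sum_addChar_mul_sq hφ hφ1 hψ ht, mul_sum, ← Equiv.sum_comp (Equiv.subRight (b / (2 * t)))]
  refine sum_congr rfl fun w _ => ?_
  rw [Equiv.subRight_apply, ← AddChar.map_add_eq_mul]
  congr 1
  field_simp
  ring

lemma card_mul_sum_filter_eq [DecidableEq F] {ι : Type*} [Fintype ι] (hψ : ψ ≠ 1) (f : ι → F)
    (g : ι → R) (D : F) :
    Fintype.card F * ∑ u with f u = D, g u = ∑ u, (∑ t, ψ (t * (D - f u))) * g u := by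
  rw [mul_sum, sum_filter]
  refine sum_congr rfl fun u _ => ?_
  rw [AddChar.sum_mulShift _ (AddChar.IsPrimitive.of_ne_one hψ)]
  simp only [sub_eq_zero, eq_comm (a := D)]
  split_ifs <;> simp

lemma card_mul_sum_addChar_sqrt [DecidableEq F] (hφ : φ.IsQuadratic) (hφ1 : φ ≠ 1) (hψ : ψ ≠ 1)
    (A D : F) :
    Fintype.card F * ∑ u with u ^ 2 = D, ψ (A * u) = (if A = 0 then (Fintype.card F : R) else 0) +
      gaussSum φ ψ * ∑ t, φ (-t) * ψ (t * D + A ^ 2 / (4 * t)) := by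
  have sum_u (t : F) : ψ (t * D) * ∑ u, ψ (-t * u ^ 2 + A * u) =
      (if t = 0 then if A = 0 then (Fintype.card F : R) else 0 else 0) +
        gaussSum φ ψ * (φ (-t) * ψ (t * D + A ^ 2 / (4 * t))) := by
    obtain rfl | ht := eq_or_ne t 0
    · have h := AddChar.sum_mulShift A (AddChar.IsPrimitive.of_ne_one hψ)
      simp only [mul_comm _ A] at h
      simp [h, MulChar.map_zero]
    · rw [sum_addChar_quadratic hφ hφ1 hψ (neg_ne_zero.2 ht), if_neg ht, AddChar.map_add_eq_mul,
        mul_neg, div_neg, neg_neg]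
      ring
  calc Fintype.card F * ∑ u with u ^ 2 = D, ψ (A * u)
      = ∑ u, (∑ t, ψ (t * (D - u ^ 2))) * ψ (A * u) :=
        card_mul_sum_filter_eq hψ _ _ D
    _ = ∑ t, ψ (t * D) * ∑ u, ψ (-t * u ^ 2 + A * u) := by
        simp only [sum_mul, mul_sum, ← AddChar.map_add_eq_mul]
        rw [sum_comm]
        refine sum_congr rfl fun t _ => sum_congr rfl fun u _ => ?_
        congr 1
        ring
    _ = _ := by
        simp only [sum_u, sum_add_distrib, ← mul_sum, sum_ite_eq', mem_univ, if_true]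

end QuadraticGaussSum

section ParabolicSum

variable {F R : Type*} [Field F] [Fintype F] [CommRing R] {φ : MulChar F R} {ψ : AddChar F R}

/-- For quadratic `φ`, the finite field analogue of the parabolic cylinder function of index
`-1/2`. The factor `2` makes its transformation law `parabolicSum_eq_mul_I` free of denominators. -/
def parabolicSum (φ : MulChar F R) (ψ : AddChar F R) (t b : F) : R :=
  ∑ v, φ v * ψ (t * v ^ 2 + 2 * b * v)

variable [IsDomain R]

/-- Expand `φ v` as a Fourier sum and carry out the Gaussian sum over `v`. -/
lemma parabolicSum_eq_sum (hφ : φ.IsQuadratic) (hφ1 : φ ≠ 1) (hψ : ψ ≠ 1) {t : F} (ht : t ≠ 0)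
    (b : F) :
    parabolicSum φ ψ t b = ∑ s, φ s * φ t * ψ (-((2 * b + s) ^ 2 / (4 * t))) := by
  apply mul_right_cancel₀ (gaussSum_ne_zero_of_ne_one hφ1 hψ)
  calc parabolicSum φ ψ t b * gaussSum φ ψ
      = ∑ v, ∑ s, φ s * ψ (t * v ^ 2 + (2 * b + s) * v) := by
        rw [parabolicSum, sum_mul]
        refine sum_congr rfl fun v _ => ?_
        rw [mul_right_comm, ← sum_quadratic_mul_addChar hφ hφ1, sum_mul]
        refine sum_congr rfl fun s _ => ?_
        rw [mul_assoc, ← AddChar.map_add_eq_mul]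
        congr 2
        ring
    _ = (∑ s, φ s * φ t * ψ (-((2 * b + s) ^ 2 / (4 * t)))) * gaussSum φ ψ := by
        rw [sum_comm, sum_mul]
        refine sum_congr rfl fun s _ => ?_
        rw [← mul_sum, sum_addChar_quadratic hφ hφ1 hψ ht]
        ring

lemma parabolicSum_eq_mul_I (hφ : φ.IsQuadratic) (hφ1 : φ ≠ 1) (hψ : ψ ≠ 1)
    {i : F} (hi : i ^ 2 = -1) {t : F} (ht : t ≠ 0) (b : F) :
    parabolicSum φ ψ t b = ψ (-(b ^ 2 / t)) * parabolicSum φ ψ t (i * b) := by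
  have h2 : (2 : F) ≠ 0 := Ring.two_ne_zero (ringChar_ne_two_of_isQuadratic hφ hφ1)
  have h1i : 1 - i ≠ 0 := fun h => h2 (by linear_combination (1 + i) * h + hi)
  have hsq : -2 * i = (1 - i) ^ 2 := by linear_combination -hi
  have hc : -2 * i * t ≠ 0 := mul_ne_zero (hsq ▸ pow_ne_zero 2 h1i) ht
  rw [parabolicSum_eq_sum hφ hφ1 hψ ht, ← (mulLeft_bijective₀ _ hc).sum_comp, parabolicSum, mul_sum]
  refine sum_congr rfl fun v _ => ?_
  have hφv : φ (-2 * i * t * v) * φ t = φ v := by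
    rw [← map_mul, ← quadratic_apply_sq_mul hφ (mul_ne_zero h1i ht) v, mul_pow, ← hsq]
    ring_nf
  have hphase : -((2 * b + -2 * i * t * v) ^ 2 / (4 * t)) =
      -(b ^ 2 / t) + (t * v ^ 2 + 2 * (i * b) * v) := by
    rw [show (4 : F) * t = 2 ^ 2 * t by ring]
    field_simp
    linear_combination -(t ^ 2 * v ^ 2) * hi
  rw [hφv, hphase, AddChar.map_add_eq_mul]
  ring

end ParabolicSum

section Conic

variable {F : Type*} [Field F] [Fintype F] [DecidableEq F]

lemma sum_ne_zero_eq_sum_conic {M : Type*} [AddCommMonoid M] (hF : ringChar F ≠ 2) {a : F}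
    (ha : a ≠ 0) (g : F → F → M) :
    ∑ x with x ≠ 0, g (x + a / x) (x - a / x) = ∑ v, ∑ u with u ^ 2 = v ^ 2 + 4 * a, g u v := by
  have h2 : (2 : F) ≠ 0 := Ring.two_ne_zero hF
  have mem_conic {u v : F} (h : u ^ 2 = v ^ 2 + 4 * a) :
      (u + v) / 2 ≠ 0 ∧ a / ((u + v) / 2) = (u - v) / 2 := by
    have ha' : a = (u + v) / 2 * ((u - v) / 2) := by
      field_simp
      linear_combination -h
    have h0 : (u + v) / 2 ≠ 0 := left_ne_zero_of_mul (ha' ▸ ha)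
    exact ⟨h0, by rw [div_eq_iff h0, mul_comm, ← ha']⟩
  rw [sum_sigma']
  refine sum_bij' (fun x _ => ⟨x - a / x, x + a / x⟩) (fun p _ => (p.2 + p.1) / 2) ?_ ?_ ?_ ?_ ?_
  · intro x hx
    simp only [mem_filter, mem_univ, true_and, mem_sigma] at hx ⊢
    field_simp
    ring
  · rintro ⟨v, u⟩ hp
    simp only [mem_filter, mem_univ, true_and, mem_sigma] at hp ⊢
    exact (mem_conic hp).1
  · intro x _
    rw [add_add_sub_cancel, ← two_mul, mul_div_cancel_left₀ _ h2]
  · rintro ⟨v, u⟩ hp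
    simp only [mem_filter, mem_univ, true_and, mem_sigma] at hp
    simp only [(mem_conic hp).2]
    congr 1
    · field_simp
      ring
    · field_simp
      ring
  · intro x _
    rfl

variable {R : Type*} [CommRing R] [IsDomain R] {φ : MulChar F R} {ψ : AddChar F R}

lemma card_mul_sum_conic (hφ : φ.IsQuadratic) (hφ1 : φ ≠ 1) (hψ : ψ ≠ 1) (a A B : F) :
    Fintype.card F * ∑ v, ∑ u with u ^ 2 = v ^ 2 + 4 * a, φ v * ψ (A * u + 2 * B * v) =
      gaussSum φ ψ * ((if A = 0 then Fintype.card F * φ (2 * B) else 0) +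
        ∑ t, φ (-t) * ψ (4 * a * t + A ^ 2 / (4 * t)) * parabolicSum φ ψ t B) := by
  calc Fintype.card F * ∑ v, ∑ u with u ^ 2 = v ^ 2 + 4 * a, φ v * ψ (A * u + 2 * B * v)
      = ∑ v, φ v * ψ (2 * B * v) *
          (Fintype.card F * ∑ u with u ^ 2 = v ^ 2 + 4 * a, ψ (A * u)) := by
        simp only [mul_sum, AddChar.map_add_eq_mul]
        refine sum_congr rfl fun v _ => sum_congr rfl fun u _ => ?_
        ring
    _ = (if A = 0 then (Fintype.card F : R) else 0) * (∑ v, φ v * ψ (2 * B * v)) +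
          gaussSum φ ψ * ∑ v, ∑ t, φ (-t) * ψ (4 * a * t + A ^ 2 / (4 * t)) *
            (φ v * ψ (t * v ^ 2 + 2 * B * v)) := by
        simp only [card_mul_sum_addChar_sqrt hφ hφ1 hψ, mul_add (φ _ * ψ _), sum_add_distrib,
          mul_sum]
        congr 1
        · exact sum_congr rfl fun v _ => mul_comm _ _
        · refine sum_congr rfl fun v _ => sum_congr rfl fun t _ => ?_
          have regroup : ψ (2 * B * v) * ψ (t * (v ^ 2 + 4 * a) + A ^ 2 / (4 * t)) =
              ψ (4 * a * t + A ^ 2 / (4 * t)) * ψ (t * v ^ 2 + 2 * B * v) := by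
            rw [← AddChar.map_add_eq_mul, ← AddChar.map_add_eq_mul]
            congr 1
            ring
          linear_combination gaussSum φ ψ * φ (-t) * φ v * regroup
    _ = _ := by
        rw [sum_quadratic_mul_addChar hφ hφ1, sum_comm]
        simp only [← mul_sum, ← parabolicSum.eq_1, mul_add, ite_mul, mul_ite, zero_mul, mul_zero]
        congr 2
        ring

end Conic

section MulCharPower

lemma isPrimitiveRoot_four_of_sq_eq_neg_one {R : Type*} [CommRing R] (hR : (-1 : R) ≠ 1) {i : R}
    (hi : i ^ 2 = -1) : IsPrimitiveRoot i 4 := by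
  have h4 : orderOf i = 2 ^ (1 + 1) := by
    refine orderOf_eq_prime_pow (by rwa [pow_one, hi]) ?_
    rw [pow_succ, pow_one, pow_mul, hi, neg_one_sq]
  exact IsPrimitiveRoot.iff_orderOf.2 h4

lemma exists_eq_pow_of_apply_primitiveRoot_eq_one {F R : Type*} [Field F] [Finite F] [Field R]
    [IsAlgClosed R] {n : ℕ} [NeZero n] {ζ : F} (hζ : IsPrimitiveRoot ζ n) {χ : MulChar F R}
    (hχ : χ ζ = 1) : ∃ ν : MulChar F R, χ = ν ^ n := by
  have := Fintype.ofFinite F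
  classical
  obtain ⟨g, hg⟩ := IsCyclic.exists_generator (α := Fˣ)
  obtain ⟨m, hm⟩ : n ∣ Fintype.card Fˣ := by
    rw [(hζ.isUnit_unit (NeZero.ne n)).eq_orderOf]
    exact orderOf_dvd_card
  have hχg : χ g ^ m = 1 := by
    have hgm : ((g : F) ^ m) ^ n = 1 := by
      rw [← pow_mul, mul_comm, ← hm, ← Units.val_pow_eq_pow_val, pow_card_eq_one, Units.val_one]
    obtain ⟨l, -, hl⟩ := hζ.eq_pow_of_pow_eq_one hgm
    rw [← map_pow, ← hl, map_pow, hχ, one_pow]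
  obtain ⟨y, hy⟩ := IsAlgClosed.exists_pow_nat_eq (χ g) (NeZero.pos n)
  have hy1 : y ^ Fintype.card Fˣ = 1 := by rw [hm, pow_mul, hy, hχg]
  have hmem := (mem_rootsOfUnity _ _).2 (Units.pow_ofPowEqOne hy1 Fintype.card_ne_zero)
  refine ⟨MulChar.ofRootOfUnity hmem hg, ?_⟩
  rw [MulChar.eq_iff hg, MulChar.pow_apply_coe, MulChar.ofRootOfUnity_spec,
    Units.val_ofPowEqOne, hy]

end MulCharPower

section Pkatz

variable {F : Type} [Field F] [Fintype F] [DecidableEq F] {ψ : AddChar F ℂ} {A₄ : MulChar F ℂ}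
  {a j k : F}

lemma sum_Pkatz_eq_sum_conic (hF : ringChar F ≠ 2) (ha : a ≠ 0) (j k : F) :
    ∑ x with x ≠ 0, (A₄ ^ 2) (a / x - x) * ψ (x * (j + k) ^ 2 + a / x * (j - k) ^ 2) =
      ∑ v, ∑ u with u ^ 2 = v ^ 2 + 4 * a,
        (A₄ ^ 2) v * ψ ((j ^ 2 + k ^ 2) * u + 2 * (j * k) * v) := by
  rw [← sum_ne_zero_eq_sum_conic hF ha
    fun u v => (A₄ ^ 2) v * ψ ((j ^ 2 + k ^ 2) * u + 2 * (j * k) * v)]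
  refine sum_congr rfl fun x _ => ?_
  rw [← neg_sub, ← neg_one_mul, map_mul, sq_apply_neg_one, one_mul]
  ring_nf

lemma card_mul_Pkatz (hφ : (A₄ ^ 2).IsQuadratic) (hφ1 : A₄ ^ 2 ≠ 1) (hψ : ψ ≠ 1) (ha : a ≠ 0)
    (hj : j ≠ 0) (hk : k ≠ 0) :
    Fintype.card F * Pkatz ψ A₄ a j k =
      Fintype.card F * ((if j ^ 2 = k ^ 2 then 1 else 0) + (if j ^ 2 + k ^ 2 = 0 then 1 else 0)) +
        ∑ t, (A₄ ^ 2) (-t) * ψ (4 * a * t + (j ^ 2 + k ^ 2) ^ 2 / (4 * t)) *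
          parabolicSum (A₄ ^ 2) ψ t (j * k) := by
  have hF := ringChar_ne_two_of_isQuadratic hφ hφ1
  have hφjk (h : j ^ 2 + k ^ 2 = 0) : (A₄ ^ 2) (2 * (j * k)) = 1 := by
    have hsq : 2 * (j * k) = (j + k) ^ 2 := by linear_combination -h
    have h2 : (2 : F) ≠ 0 := Ring.two_ne_zero hF
    have hjk0 : 2 * (j * k) ≠ 0 := mul_ne_zero h2 (mul_ne_zero hj hk)
    rw [hsq] at hjk0 ⊢
    exact quadratic_apply_sq hφ (pow_ne_zero_iff two_ne_zero |>.1 hjk0)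
  have hφdelta : (if j ^ 2 + k ^ 2 = 0 then Fintype.card F * (A₄ ^ 2) (2 * (j * k)) else 0) =
      (Fintype.card F : ℂ) * if j ^ 2 + k ^ 2 = 0 then 1 else 0 := by
    split_ifs with h
    · rw [hφjk h]
    · rw [mul_zero]
  rw [Pkatz, sq_apply_neg_one, one_mul, ite_eq_add_ite_eq_neg hF hk,
    sum_Pkatz_eq_sum_conic hF ha, mul_add, mul_left_comm,
    card_mul_sum_conic hφ hφ1 hψ, inv_mul_cancel_left₀ (gaussSum_ne_zero_of_ne_one hφ1 hψ),
    hφdelta, mul_add, add_assoc]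

lemma Pkatz_I_mul (hφ : (A₄ ^ 2).IsQuadratic) (hφ1 : A₄ ^ 2 ≠ 1) (hψ : ψ ≠ 1) (ha : a ≠ 0)
    {i : F} (hi : i ^ 2 = -1) (hj : j ≠ 0) (hk : k ≠ 0) :
    Pkatz ψ A₄ a (i * j) k = Pkatz ψ A₄ a j k := by
  have hi0 : i ≠ 0 := fun h => by simp [h] at hi
  apply mul_left_cancel₀ (card_cast_ne_zero_of_addChar_ne_one (R := ℂ) hψ)
  rw [card_mul_Pkatz hφ hφ1 hψ ha (mul_ne_zero hi0 hj) hk, card_mul_Pkatz hφ hφ1 hψ ha hj hk]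
  have hdelta₁ : (i * j) ^ 2 = k ^ 2 ↔ j ^ 2 + k ^ 2 = 0 := by
    constructor <;> intro h <;> linear_combination j ^ 2 * hi - h
  have hdelta₂ : (i * j) ^ 2 + k ^ 2 = 0 ↔ j ^ 2 = k ^ 2 := by
    constructor <;> intro h <;> linear_combination j ^ 2 * hi - h
  simp only [hdelta₁, hdelta₂]
  congr 1
  · rw [add_comm]
  refine sum_congr rfl fun t _ => ?_
  obtain rfl | ht := eq_or_ne t 0
  · simp only [neg_zero, MulChar.map_zero, zero_mul]
  have h2 : (2 : F) ≠ 0 := Ring.two_ne_zero (ringChar_ne_two_of_isQuadratic hφ hφ1)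
  have hphase : 4 * a * t + (j ^ 2 + k ^ 2) ^ 2 / (4 * t) + -((j * k) ^ 2 / t) =
      4 * a * t + ((i * j) ^ 2 + k ^ 2) ^ 2 / (4 * t) := by
    rw [show (4 : F) * t = 2 ^ 2 * t by ring, mul_pow i j, hi]
    field_simp
    ring
  rw [parabolicSum_eq_mul_I hφ hφ1 hψ hi ht (j * k), ← hphase, AddChar.map_add_eq_mul _ _ (-_),
    mul_assoc i j k]
  ring

lemma apply_mul_Tmel2 {χ₁ χ₂ : MulChar F ℂ} {c : F} (hc : c ≠ 0)
    (hP : ∀ j k, j ≠ 0 → k ≠ 0 → Pkatz ψ A₄ a (c * j) k = Pkatz ψ A₄ a j k) :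
    χ₁ c * Tmel2 ψ A₄ a χ₁ χ₂ = Tmel2 ψ A₄ a χ₁ χ₂ := by
  rw [Tmel2, mul_sum]
  refine sum_equiv (Equiv.mulLeft₀ c hc) (fun j => by simp [hc]) fun j hj => ?_
  rw [mul_sum]
  refine sum_congr rfl fun k hk => ?_
  rw [Equiv.mulLeft₀_apply, hP j k (mem_filter.1 hj).2 (mem_filter.1 hk).2, map_mul]
  ring

end Pkatz

theorem T2_eq_zero_of_mu_pow_four_nontrivial_general
    (F : Type) [Field F] [Fintype F] [DecidableEq F]
    (ψ : AddChar F ℂ) (hψ : ψ ≠ 1)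
    (A₄ : MulChar F ℂ) (hA₄ : orderOf A₄ = 4)
    (a : F) (ha : a ≠ 0)
    (χ₁ χ₂ : MulChar F ℂ)
    (hχ₁ : ∀ ν : MulChar F ℂ, χ₁ ≠ ν ^ 4) :
    Tmel2 ψ A₄ a χ₁ χ₂ = 0 := by
  have hφ1 : A₄ ^ 2 ≠ 1 := pow_ne_one_of_lt_orderOf two_ne_zero (by rw [hA₄]; norm_num)
  have hφ : (A₄ ^ 2).IsQuadratic := by
    rw [MulChar.isQuadratic_iff_sq_eq_one, ← pow_mul, ← pow_orderOf_eq_one A₄, hA₄]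
  obtain ⟨i, hi⟩ : ∃ i : F, i ^ 2 = -1 := by
    have hq : 4 ∣ Fintype.card F - 1 := hA₄ ▸ A₄.orderOf_dvd_card_sub_one
    obtain ⟨i, hi⟩ := (FiniteField.isSquare_neg_one_iff (F := F)).2 (by omega)
    exact ⟨i, by rw [hi, sq]⟩
  have hi4 : IsPrimitiveRoot i 4 := isPrimitiveRoot_four_of_sq_eq_neg_one
    (Ring.neg_one_ne_one_of_char_ne_two (ringChar_ne_two_of_isQuadratic hφ hφ1)) hi
  have hχi : χ₁ i ≠ 1 := fun h =>
    let ⟨ν, hν⟩ := exists_eq_pow_of_apply_primitiveRoot_eq_one hi4 h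
    hχ₁ ν hν
  have hT : χ₁ i * Tmel2 ψ A₄ a χ₁ χ₂ = Tmel2 ψ A₄ a χ₁ χ₂ :=
    apply_mul_Tmel2 (hi4.ne_zero four_ne_zero) fun j k => Pkatz_I_mul hφ hφ1 hψ ha hi
  exact (mul_left_eq_self₀.1 hT).resolve_left hχi

/-- If `μ⁴` is nontrivial and `χ₁` is not a fourth power, then `T(χ₁,χ₂) = 0`. -/
theorem T2_eq_zero_of_mu_pow_four_nontrivial
    (F : Type) [Field F] [Fintype F] [DecidableEq F]
    (hq : Fintype.card F % 4 = 1)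
    (ψ : AddChar F ℂ) (hψ : ψ ≠ 1)
    (A₄ : MulChar F ℂ) (hA₄ : orderOf A₄ = 4)
    (a : F) (ha : a ≠ 0)
    (lam₁ lam₂ μ : MulChar F ℂ)
    (hμ : lam₁ * lam₂ * A₄ ^ 2 = μ ^ 2)
    (hμ4 : μ ^ 4 ≠ 1)
    (hχ₁ : ∀ ν : MulChar F ℂ, lam₁ ^ 2 * A₄ ^ 2 ≠ ν ^ 4) :
    Tmel2 ψ A₄ a (lam₁ ^ 2 * A₄ ^ 2) (lam₂ ^ 2 * A₄ ^ 2) = 0 := by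
  exact T2_eq_zero_of_mu_pow_four_nontrivial_general F ψ hψ A₄ hA₄ a ha _ _ hχ₁
end
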